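/- arXiv:2207.06980 — 3 statements merged into one kernel-verified Lean document; each statement's English description precedes it below -/
import Mathlib

section
/- Let α, β₁, β₂ be intuitionistic fuzzy values with β₂ ⊊ β₁ ⊊ α in Atanassov's order. Then Z(α, β₁) < Z(α, β₂), and consequently JS(α, β₁) < JS(α, β₂). -/
/-- `L p q = p·log₂(2p/(p+q)) + q·log₂(2q/(p+q))`, with Lean's conventions
`0 * log₂ _ = 0` and `x / 0 = 0`, `log₂ 0 = 0` implementing `0·log 0 = 0`
and `0·log(0/0) = 0`. -/
noncomputable def L (p q : ℝ) : ℝ :=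
  p * Real.logb 2 (2 * p / (p + q)) + q * Real.logb 2 (2 * q / (p + q))

/-- An intuitionistic fuzzy value: a pair `⟨μ, ν⟩` with `0 ≤ μ`, `0 ≤ ν`,
`μ + ν ≤ 1` (hence also `μ ≤ 1` and `ν ≤ 1`). -/
@[ext]
structure IFV where
  mu : ℝ
  nu : ℝ
  mu_nonneg : 0 ≤ mu
  nu_nonneg : 0 ≤ nu
  sum_le : mu + nu ≤ 1

/-- `Z(α,β) = L(1−μ_α, 1−μ_β) + L(ν_α, ν_β)`. -/
noncomputable def Z (a b : IFV) : ℝ := L (1 - a.mu) (1 - b.mu) + L a.nu b.nu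

/-- The normalized Jensen–Shannon IF divergence `JS(α,β) = √(Z(α,β)/2)`. -/
noncomputable def JS (a b : IFV) : ℝ := Real.sqrt (Z a b / 2)

/-- Atanassov's order: `α ⊂ β` iff `μ_α ≤ μ_β` and `ν_α ≥ ν_β`. -/
def IFV.sub (a b : IFV) : Prop := a.mu ≤ b.mu ∧ b.nu ≤ a.nu

/-- Strict Atanassov order: `α ⊊ β` iff `α ⊂ β` and `α ≠ β`. -/
def IFV.ssub (a b : IFV) : Prop := a.sub b ∧ a ≠ b

/-- The IFV `⟨1, 0⟩`. -/
def IFV.posOne : IFV := ⟨1, 0, by norm_num, le_rfl, by norm_num⟩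

/-- The IFV `⟨0, 1⟩`. -/
def IFV.negOne : IFV := ⟨0, 1, le_rfl, by norm_num, by norm_num⟩

lemma L_zero_left (q : ℝ) : L 0 q = q := by
  unfold L
  rcases eq_or_ne q 0 with h | h
  · simp [h]
  · have : 2 * q / (0 + q) = 2 := by rw [zero_add]; field_simp
    rw [this, Real.logb_self_eq_one (by norm_num)]; ring

lemma L_self (p : ℝ) : L p p = 0 := by
  unfold L
  rcases eq_or_ne p 0 with h | h
  · simp [h]
  · have : 2 * p / (p + p) = 1 := by rw [← two_mul]; exact div_self (by simpa using h)
    rw [this]; simp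

lemma L_lt (p q r : ℝ) (hp : 0 ≤ p) (hq : p ≤ q) (hr : q < r) : L p q < L p r := by
  rcases hp.eq_or_lt with h | hp
  · subst h; rw [L_zero_left, L_zero_left]; exact hr
  have hq0 : 0 < q := by linarith
  have hr0 : 0 < r := by linarith
  have l2 : 0 < Real.log 2 := Real.log_pos (by norm_num)
  have hpq : 0 < p + q := by linarith
  have hpr : 0 < p + r := by linarith
  have key : ∀ s, 0 < s → L p s * Real.log 2 =
      p * (Real.log 2 + Real.log p - Real.log (p + s))
      + s * (Real.log 2 + Real.log s - Real.log (p + s)) := by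
    intro s hs
    have : 0 < p + s := by linarith
    unfold L Real.logb
    rw [Real.log_div (by positivity) (by positivity), Real.log_div (by positivity) (by positivity),
      Real.log_mul (by positivity) (by positivity), Real.log_mul (by positivity) (by positivity)]
    field_simp
  apply lt_of_mul_lt_mul_right _ l2.le
  rw [key q hq0, key r hr0]
  -- slope of the tangent line at `q`
  have h1 : 0 ≤ Real.log 2 + Real.log q - Real.log (p + q) := by
    rw [← Real.log_mul (by positivity) (by positivity)]
    have := Real.log_le_log hpq (show p + q ≤ 2 * q by linarith)
    linarith
  have h2 : Real.log (p + r) - Real.log (p + q) < (p + r) / (p + q) - 1 := by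
    rw [← Real.log_div (by positivity) (by positivity)]
    apply Real.log_lt_sub_one_of_pos (by positivity)
    intro h
    rw [div_eq_one_iff_eq hpq.ne'] at h
    linarith
  have h3 : Real.log q + Real.log (p + r) - (Real.log r + Real.log (p + q))
      ≤ q * (p + r) / (r * (p + q)) - 1 := by
    rw [← Real.log_mul (by positivity) (by positivity),
      ← Real.log_mul (by positivity) (by positivity),
      ← Real.log_div (by positivity) (by positivity)]
    exact Real.log_le_sub_one_of_pos (by positivity)
  have h4 := mul_lt_mul_of_pos_left h2 hp
  have h5 := mul_le_mul_of_nonneg_left h3 hr0.le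
  have h6 := mul_nonneg (sub_nonneg.2 hr.le) h1
  have h7 : p * ((p + r) / (p + q) - 1) + r * (q * (p + r) / (r * (p + q)) - 1) = 0 := by
    field_simp; ring
  linarith

lemma L_le (p q r : ℝ) (hp : 0 ≤ p) (hq : p ≤ q) (hr : q ≤ r) : L p q ≤ L p r := by
  rcases hr.eq_or_lt with h | h
  · rw [h]
  · exact (L_lt p q r hp hq h).le

theorem Z_JS_strictAnti_of_ssub_chain (a b1 b2 : IFV)
    (h1 : b2.ssub b1) (h2 : b1.ssub a) :
    Z a b1 < Z a b2 ∧ JS a b1 < JS a b2 := by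
  obtain ⟨⟨hm, hn⟩, hne⟩ := h1
  obtain ⟨⟨hm', hn'⟩, -⟩ := h2
  have ha : 0 ≤ 1 - a.mu := by linarith [a.sum_le, a.nu_nonneg]
  have hZ : Z a b1 < Z a b2 := by
    unfold Z
    rcases hm.eq_or_lt with h | h
    · have hn2 : b1.nu < b2.nu := lt_of_le_of_ne hn fun e => hne (IFV.ext h e.symm)
      exact add_lt_add_of_le_of_lt (L_le _ _ _ ha (by linarith) (by linarith))
        (L_lt _ _ _ a.nu_nonneg hn' hn2)
    · exact add_lt_add_of_lt_of_le (L_lt _ _ _ ha (by linarith) (by linarith))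
        (L_le _ _ _ a.nu_nonneg hn' hn)
  have h0 : 0 ≤ Z a b1 := by
    unfold Z
    have e1 := L_le (1 - a.mu) (1 - a.mu) (1 - b1.mu) ha le_rfl (by linarith)
    have e2 := L_le a.nu a.nu b1.nu a.nu_nonneg le_rfl hn'
    rw [L_self] at e1 e2
    linarith
  exact ⟨hZ, Real.sqrt_lt_sqrt (by linarith) (by linarith)⟩
end

section
/- For intuitionistic fuzzy values α and β, JS(α, β) = 1 if and only if (α = ⟨0,1⟩ and β = ⟨1,0⟩) or (α = ⟨1,0⟩ and β = ⟨0,1⟩). -/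
theorem L_comm' (p q : ℝ) : L p q = L q p := by
  unfold L
  rw [add_comm q p]
  ring

theorem L_zero' (p : ℝ) (hp : 0 ≤ p) : L p 0 = p := by
  unfold L
  rcases hp.eq_or_lt with rfl | h
  · simp
  · have : 2 * p / (p + 0) = 2 := by field_simp; simp
    rw [this, Real.logb_self_eq_one (by norm_num)]
    ring

theorem L_le_aux (p q : ℝ) (hq : 0 ≤ q) (h : q ≤ p) : L p q ≤ p - q := by
  rcases hq.eq_or_lt with rfl | hq
  · rw [L_zero' p h]; simp
  have hp : 0 < p := by linarith
  have hs : 0 < p + q := by linarith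
  have hl : 0 < Real.log 2 := Real.log_pos (by norm_num)
  have hx : 2 * (q / (p + q)) ≤ 1 := by
    rw [← mul_div_assoc, div_le_one hs]; linarith
  have hx0 : 0 < q / (p + q) := by positivity
  have key := Real.strictConcave_binEntropy.concaveOn.2
    (show (2⁻¹ : ℝ) ∈ Set.Icc (0 : ℝ) 1 by constructor <;> norm_num)
    (show (0 : ℝ) ∈ Set.Icc (0 : ℝ) 1 by constructor <;> norm_num)
    (show 0 ≤ 2 * (q / (p + q)) by positivity)
    (show 0 ≤ 1 - 2 * (q / (p + q)) by linarith) (by ring)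
  simp only [smul_eq_mul, Real.binEntropy_two_inv, Real.binEntropy_zero, mul_zero, add_zero] at key
  have e1 : 2 * (q / (p + q)) * 2⁻¹ = q / (p + q) := by ring
  have e2 : 1 - q / (p + q) = p / (p + q) := by field_simp; ring
  rw [e1, Real.binEntropy, e2, Real.log_inv, Real.log_inv,
    Real.log_div hq.ne' hs.ne', Real.log_div hp.ne' hs.ne'] at key
  have key2 := mul_le_mul_of_nonneg_left key hs.le
  have e3 : (p + q) * (2 * (q / (p + q)) * Real.log 2) = 2 * q * Real.log 2 := by field_simp
  have e4 : (p + q) * (q / (p + q) * -(Real.log q - Real.log (p + q)) +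
      p / (p + q) * -(Real.log p - Real.log (p + q))) =
      q * -(Real.log q - Real.log (p + q)) + p * -(Real.log p - Real.log (p + q)) := by field_simp
  rw [e3, e4] at key2
  have e5 : L p q = (p * (Real.log 2 + Real.log p - Real.log (p + q)) +
      q * (Real.log 2 + Real.log q - Real.log (p + q))) / Real.log 2 := by
    unfold L Real.logb
    rw [Real.log_div (by positivity) hs.ne', Real.log_div (by positivity) hs.ne',
      Real.log_mul (by norm_num) hq.ne', Real.log_mul (by norm_num) hp.ne']
    ring
  rw [e5, div_le_iff₀ hl]
  linarith

theorem L_le_abs (p q : ℝ) (hp : 0 ≤ p) (hq : 0 ≤ q) : L p q ≤ |p - q| := by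
  rcases le_total q p with h | h
  · exact (L_le_aux p q hq h).trans (le_abs_self _)
  · rw [L_comm', abs_sub_comm]
    exact (L_le_aux q p hp h).trans (le_abs_self _)

theorem JS_eq_one_iff (a b : IFV) :
    JS a b = 1 ↔
      (a = IFV.negOne ∧ b = IFV.posOne) ∨ (a = IFV.posOne ∧ b = IFV.negOne) := by
  constructor
  · intro h
    obtain ⟨m, n, hm, hn, hs⟩ := a
    obtain ⟨m', n', hm', hn', hs'⟩ := b
    rw [JS, Real.sqrt_eq_one, Z] at h
    have h1 := L_le_abs (1 - m) (1 - m') (by linarith) (by linarith)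
    have h2 := L_le_abs n n' hn hn'
    simp only [IFV.negOne, IFV.posOne, IFV.mk.injEq] at h ⊢
    rcases abs_cases (1 - m - (1 - m')) with ⟨e, _⟩ | ⟨e, _⟩ <;>
    rcases abs_cases (n - n') with ⟨e', _⟩ | ⟨e', _⟩ <;> rw [e] at h1 <;> rw [e'] at h2
    · left; refine ⟨⟨?_, ?_⟩, ?_, ?_⟩ <;> linarith
    · exfalso; linarith
    · exfalso; linarith
    · right; refine ⟨⟨?_, ?_⟩, ?_, ?_⟩ <;> linarith
  · have h1 : L 1 0 = 1 := L_zero' 1 (by norm_num)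
    have h2 : L 0 1 = 1 := by rw [L_comm', h1]
    rintro (⟨rfl, rfl⟩ | ⟨rfl, rfl⟩) <;>
      norm_num [JS, Z, IFV.negOne, IFV.posOne, h1, h2]
end

section
/- For all intuitionistic fuzzy values α, β, γ, the triangle inequality holds: JS(α, γ) ≤ JS(α, β) + JS(β, γ). -/
noncomputable def MM (p q : ℝ) : ℝ :=
  p * Real.log p + q * Real.log q - (p + q) * Real.log (p + q) + (p + q) * Real.log 2

noncomputable def uu (x : ℝ) : ℝ := Real.log 2 - Real.log (1 + x)

noncomputable def vv (x : ℝ) : ℝ := Real.log 2 + Real.log x - Real.log (1 + x)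

noncomputable def kk (x : ℝ) : ℝ := 2 * MM x 1 / (1 + x) + uu x * vv x

noncomputable def gg (x : ℝ) : ℝ := uu x / Real.sqrt (MM x 1)

lemma MM_comm (p q : ℝ) : MM p q = MM q p := by
  unfold MM; rw [add_comm p q]; ring

lemma MM_self (p : ℝ) : MM p p = 0 := by
  unfold MM
  by_cases hp : p = 0
  · simp [hp]
  · rw [← two_mul p, Real.log_mul two_ne_zero hp]; ring

lemma L_eq (p q : ℝ) (hp : 0 ≤ p) (hq : 0 ≤ q) : L p q = MM p q / Real.log 2 := by
  have key : ∀ a b : ℝ, 0 ≤ a → 0 ≤ b → a * Real.log (2 * a / (a + b))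
      = a * (Real.log 2 + Real.log a - Real.log (a + b)) := by
    intro a b ha hb
    rcases ha.eq_or_lt with h | h
    · simp [← h]
    · rw [Real.log_div (by positivity) (by positivity), Real.log_mul two_ne_zero h.ne']
  unfold L MM Real.logb
  have h1 := key p q hp hq
  have h2 := key q p hq hp
  rw [add_comm q p] at h2
  rw [← mul_div_assoc, ← mul_div_assoc, h1, h2, ← add_div]
  congr 1; ring

lemma MM_pos (p q : ℝ) (hp : 0 ≤ p) (hq : 0 ≤ q) (h : p ≠ q) : 0 < MM p q := by
  have := Real.strictConvexOn_mul_log.2 hp hq h (show (0:ℝ) < 1/2 by norm_num)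
    (show (0:ℝ) < 1/2 by norm_num) (by norm_num)
  simp only [smul_eq_mul] at this
  have hs : 0 < p + q := by
    rcases hp.eq_or_lt with h0 | h0
    · rcases hq.eq_or_lt with h1 | h1
      · exact absurd (h0.symm.trans h1) h
      · linarith
    · linarith
  have e : 1/2 * p + 1/2 * q = (p + q) / 2 := by ring
  rw [e, Real.log_div hs.ne' two_ne_zero] at this
  unfold MM
  linarith

lemma MM_nonneg (p q : ℝ) (hp : 0 ≤ p) (hq : 0 ≤ q) : 0 ≤ MM p q := by
  by_cases h : p = q
  · rw [h, MM_self]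
  · exact (MM_pos p q hp hq h).le

lemma MM_cont (p : ℝ) : Continuous (fun q => MM p q) := by
  unfold MM
  have h1 := Real.continuous_mul_log
  have h2 : Continuous (fun q : ℝ => (p + q) * Real.log (p + q)) :=
    h1.comp (continuous_const.add continuous_id)
  fun_prop

lemma MM_scale (p q : ℝ) (hp : 0 ≤ p) (hq : 0 < q) : MM p q = q * MM (p / q) 1 := by
  unfold MM
  have e : p / q + 1 = (p + q) / q := by field_simp
  have hs : p + q ≠ 0 := by positivity
  rw [e, Real.log_div hs hq.ne', Real.log_one]
  rcases hp.eq_or_lt with h | h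
  · subst h; field_simp; simp
  · rw [Real.log_div h.ne' hq.ne']; field_simp; ring

lemma MM_deriv (p q : ℝ) (hp : 0 ≤ p) (hq : 0 < q) :
    HasDerivAt (fun q => MM p q) (uu (p / q)) q := by
  unfold MM
  have hs : p + q ≠ 0 := by positivity
  have h1 := Real.hasDerivAt_mul_log hq.ne'
  have h0 : HasDerivAt (fun q : ℝ => p + q) 1 q := (hasDerivAt_id q).const_add p
  have h2 := (Real.hasDerivAt_mul_log hs).comp q h0
  have h3 := h0.mul_const (Real.log 2)
  refine (((h1.const_add (p * Real.log p)).sub h2).add h3).congr_deriv ?_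
  unfold uu
  have e : 1 + p / q = (p + q) / q := by field_simp; ring
  rw [e, Real.log_div hs hq.ne']
  ring

lemma hh_deriv (x : ℝ) (hx : 0 < x) : HasDerivAt (fun x => MM x 1) (vv x) x := by
  have := MM_deriv 1 x zero_le_one hx
  have e : (fun x => MM x 1) = fun x => MM 1 x := by funext y; exact MM_comm _ _
  rw [e]
  convert this using 1
  unfold uu vv
  have e : 1 + 1 / x = (1 + x) / x := by field_simp; ring
  rw [e, Real.log_div (by positivity) hx.ne']; ring

lemma uu_deriv (x : ℝ) (hx : 0 < x) : HasDerivAt uu (-(1 / (1 + x))) x := by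
  unfold uu
  have h0 : HasDerivAt (fun q : ℝ => 1 + q) 1 x := (hasDerivAt_id x).const_add 1
  simpa using (h0.log (by positivity)).const_sub (Real.log 2)

lemma vv_deriv (x : ℝ) (hx : 0 < x) : HasDerivAt vv (1 / x - 1 / (1 + x)) x := by
  unfold vv
  have h0 : HasDerivAt (fun q : ℝ => 1 + q) 1 x := (hasDerivAt_id x).const_add 1
  refine (((Real.hasDerivAt_log hx.ne').const_add (Real.log 2)).sub
    (h0.log (by positivity))).congr_deriv ?_
  simp

lemma hh_eq (x : ℝ) : MM x 1 = x * vv x + uu x := by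
  unfold MM vv uu; rw [Real.log_one, add_comm x 1]; ring

lemma kk_deriv (x : ℝ) (hx : 0 < x) :
    HasDerivAt kk ((1 - x) * MM x 1 / (x * (1 + x) ^ 2)) x := by
  unfold kk
  have h0 : HasDerivAt (fun q : ℝ => 1 + q) 1 x := (hasDerivAt_id x).const_add 1
  have hs : 1 + x ≠ 0 := by positivity
  refine ((((hh_deriv x hx).const_mul 2).div h0 hs).add
    ((uu_deriv x hx).mul (vv_deriv x hx))).congr_deriv ?_
  rw [hh_eq]
  field_simp
  ring

lemma kk_nonpos (x : ℝ) (hx : 0 < x) : kk x ≤ 0 := by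
  have k1 : kk 1 = 0 := by
    unfold kk; rw [MM_self]; unfold uu vv; norm_num
  rcases le_total x 1 with h | h
  · have : MonotoneOn kk (Set.Ioc 0 1) := by
      apply monotoneOn_of_deriv_nonneg (convex_Ioc 0 1)
      · intro y hy; exact (kk_deriv y hy.1).continuousAt.continuousWithinAt
      · intro y hy
        rw [interior_Ioc] at hy
        exact (kk_deriv y hy.1).differentiableAt.differentiableWithinAt
      · intro y hy
        rw [interior_Ioc] at hy
        have h0 := hy.1
        rw [(kk_deriv y hy.1).deriv]
        have := MM_nonneg y 1 hy.1.le zero_le_one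
        have h2 : 0 ≤ 1 - y := by linarith [hy.2]
        positivity
    rw [← k1]; exact this ⟨hx, h⟩ ⟨one_pos, le_rfl⟩ h
  · have : AntitoneOn kk (Set.Ici 1) := by
      have pos : ∀ y : ℝ, 1 ≤ y → 0 < y := fun y hy => by linarith
      apply antitoneOn_of_deriv_nonpos (convex_Ici 1)
      · intro y hy; exact (kk_deriv y (pos y hy)).continuousAt.continuousWithinAt
      · intro y hy
        rw [interior_Ici] at hy
        exact (kk_deriv y (pos y (le_of_lt hy))).differentiableAt.differentiableWithinAt
      · intro y hy
        rw [interior_Ici] at hy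
        have h0 := pos y (le_of_lt hy)
        rw [(kk_deriv y h0).deriv]
        have := MM_nonneg y 1 h0.le zero_le_one
        have h2 : 1 - y ≤ 0 := by linarith [Set.mem_Ioi.1 hy]
        apply div_nonpos_of_nonpos_of_nonneg
        · exact mul_nonpos_of_nonpos_of_nonneg h2 this
        · positivity
    rw [← k1]; exact this (le_refl (1:ℝ)) h h

lemma gg_deriv (x : ℝ) (hx : 0 < x) (h1 : x ≠ 1) :
    HasDerivAt gg (-(kk x) / (2 * MM x 1 * Real.sqrt (MM x 1)) ) x := by
  unfold gg
  have hp := MM_pos x 1 hx.le zero_le_one h1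
  have hsq : 0 < Real.sqrt (MM x 1) := Real.sqrt_pos.2 hp
  refine ((uu_deriv x hx).div ((hh_deriv x hx).sqrt hp.ne') hsq.ne').congr_deriv ?_
  unfold kk
  have e := Real.sq_sqrt hp.le
  set s := Real.sqrt (MM x 1) with hs
  rw [← e]
  have : 1 + x ≠ 0 := by positivity
  field_simp
  ring

lemma gg_mono (s : Set ℝ) (hc : Convex ℝ s) (hs : ∀ x ∈ s, 0 < x ∧ x ≠ 1) : MonotoneOn gg s := by
  apply monotoneOn_of_deriv_nonneg hc
  · intro y hy; exact (gg_deriv y (hs y hy).1 (hs y hy).2).continuousAt.continuousWithinAt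
  · intro y hy
    have hy := interior_subset hy
    exact (gg_deriv y (hs y hy).1 (hs y hy).2).differentiableAt.differentiableWithinAt
  · intro y hy
    have hy := interior_subset hy
    rw [(gg_deriv y (hs y hy).1 (hs y hy).2).deriv]
    have := MM_nonneg y 1 (hs y hy).1.le zero_le_one
    have := kk_nonpos y (hs y hy).1
    apply div_nonneg
    · linarith
    · positivity

lemma sqrt_deriv (p q : ℝ) (hp : 0 ≤ p) (hq : 0 < q) (h : p ≠ q) :
    HasDerivAt (fun q => Real.sqrt (MM p q)) (gg (p / q) / (2 * Real.sqrt q)) q := by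
  convert (MM_deriv p q hp hq).sqrt (MM_pos p q hp hq.le h).ne' using 1
  rw [MM_scale p q hp hq, Real.sqrt_mul hq.le]
  unfold gg
  rw [div_div]; ring

lemma MM_anti (r x y : ℝ) (hx : 0 ≤ x) (hxy : x ≤ y) (hyr : y ≤ r) : MM r y ≤ MM r x := by
  have : AntitoneOn (fun q => MM r q) (Set.Icc 0 r) := by
    apply antitoneOn_of_deriv_nonpos (convex_Icc 0 r)
    · exact (MM_cont r).continuousOn
    · intro z hz
      rw [interior_Icc] at hz
      exact (MM_deriv r z (hz.1.trans hz.2).le hz.1).differentiableAt.differentiableWithinAt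
    · intro z hz
      rw [interior_Icc] at hz
      rw [(MM_deriv r z (hz.1.trans hz.2).le hz.1).deriv]
      have : 1 ≤ r / z := (one_le_div hz.1).2 hz.2.le
      unfold uu
      have := Real.log_le_log two_pos (show (2:ℝ) ≤ 1 + r / z by linarith)
      linarith
  exact this ⟨hx, hxy.trans hyr⟩ ⟨hx.trans hxy, hyr⟩ hxy

lemma MM_mono (p x y : ℝ) (hp : 0 ≤ p) (hx : p ≤ x) (hxy : x ≤ y) : MM p x ≤ MM p y := by
  have : MonotoneOn (fun q => MM p q) (Set.Ici p) := by
    apply monotoneOn_of_deriv_nonneg (convex_Ici p)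
    · exact (MM_cont p).continuousOn
    · intro z hz
      rw [interior_Ici] at hz
      exact (MM_deriv p z hp (hp.trans_lt hz)).differentiableAt.differentiableWithinAt
    · intro z hz
      rw [interior_Ici] at hz
      have hz0 : 0 < z := hp.trans_lt hz
      rw [(MM_deriv p z hp hz0).deriv]
      have : p / z ≤ 1 := (div_le_one hz0).2 (le_of_lt hz)
      have h0 : 0 ≤ p / z := by positivity
      unfold uu
      have := Real.log_le_log (show 0 < 1 + p / z by linarith) (show 1 + p / z ≤ 2 by linarith)
      linarith
  exact this hx (hx.trans hxy) hxy

lemma tri_mid (p q r : ℝ) (hp : 0 ≤ p) (h1 : p < q) (h2 : q < r) :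
    Real.sqrt (MM p r) ≤ Real.sqrt (MM p q) + Real.sqrt (MM r q) := by
  by_contra! hlt
  set S : ℝ → ℝ := fun q => Real.sqrt (MM p q) + Real.sqrt (MM r q) with hS
  have hr : 0 ≤ r := by linarith
  have hcont : Continuous S := ((MM_cont p).sqrt).add ((MM_cont r).sqrt)
  have hder : ∀ c, p < c → c < r →
      HasDerivAt S ((gg (p / c) + gg (r / c)) / (2 * Real.sqrt c)) c := by
    intro c hc1 hc2
    rw [add_div]
    exact (sqrt_deriv p c hp (by linarith) hc1.ne).add (sqrt_deriv r c hr (by linarith) hc2.ne')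
  have Sp : S p = Real.sqrt (MM p r) := by simp [hS, MM_self, MM_comm r p]
  have Sr : S r = Real.sqrt (MM p r) := by simp [hS, MM_self]
  have Sq : S q < Real.sqrt (MM p r) := hlt
  obtain ⟨c, hc, ec⟩ := exists_hasDerivAt_eq_slope S _ h1 hcont.continuousOn
    (fun c hc => hder c hc.1 (hc.2.trans h2))
  obtain ⟨d, hd, ed⟩ := exists_hasDerivAt_eq_slope S _ h2 hcont.continuousOn
    (fun c hc => hder c (h1.trans hc.1) hc.2)
  have c0 : 0 < c := by linarith [hc.1]
  have d0 : 0 < d := by linarith [hd.1]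
  have hcd : c < d := hc.2.trans hd.1
  have nc : gg (p / c) + gg (r / c) < 0 := by
    have : (gg (p / c) + gg (r / c)) / (2 * Real.sqrt c) < 0 := by
      rw [ec]; apply div_neg_of_neg_of_pos <;> linarith
    by_contra! h
    have : 0 ≤ (gg (p / c) + gg (r / c)) / (2 * Real.sqrt c) := by positivity
    linarith
  have pd : 0 < gg (p / d) + gg (r / d) := by
    have : 0 < (gg (p / d) + gg (r / d)) / (2 * Real.sqrt d) := by
      rw [ed]; apply div_pos <;> linarith
    by_contra! h
    have : (gg (p / d) + gg (r / d)) / (2 * Real.sqrt d) ≤ 0 :=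
      div_nonpos_of_nonpos_of_nonneg h (by positivity)
    linarith
  have m1 : gg (p / d) ≤ gg (p / c) := by
    rcases hp.eq_or_lt with h | h
    · simp [← h]
    · apply gg_mono (Set.Ioo 0 1) (convex_Ioo 0 1) (fun x hx => ⟨hx.1, hx.2.ne⟩)
      · exact ⟨by positivity, (div_lt_one d0).2 (hc.1.trans hcd)⟩
      · exact ⟨by positivity, (div_lt_one c0).2 hc.1⟩
      · gcongr
  have m2 : gg (r / d) ≤ gg (r / c) := by
    apply gg_mono (Set.Ioi 1) (convex_Ioi 1)
      (fun x hx => ⟨one_pos.trans hx, (ne_of_lt hx).symm⟩)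
    · exact (one_lt_div d0).2 hd.2
    · exact (one_lt_div c0).2 (hcd.trans hd.2)
    · gcongr
  linarith

lemma tri_le (p q r : ℝ) (hp : 0 ≤ p) (hq : 0 ≤ q) (h : p ≤ r) :
    Real.sqrt (MM p r) ≤ Real.sqrt (MM p q) + Real.sqrt (MM q r) := by
  rcases le_or_gt q p with h1 | h1
  · have := Real.sqrt_le_sqrt (MM_anti r q p hq h1 h)
    rw [MM_comm r p, MM_comm r q] at this
    linarith [Real.sqrt_nonneg (MM p q)]
  rcases le_or_gt r q with h2 | h2
  · have := Real.sqrt_le_sqrt (MM_mono p r q hp h h2)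
    linarith [Real.sqrt_nonneg (MM q r)]
  rw [MM_comm q r]
  exact tri_mid p q r hp h1 h2

lemma tri (p q r : ℝ) (hp : 0 ≤ p) (hq : 0 ≤ q) (hr : 0 ≤ r) :
    Real.sqrt (MM p r) ≤ Real.sqrt (MM p q) + Real.sqrt (MM q r) := by
  rcases le_total p r with h | h
  · exact tri_le p q r hp hq h
  · have := tri_le r q p hr hq h
    rw [MM_comm r p, MM_comm r q, MM_comm q p] at this
    linarith

lemma mink (x1 x2 x3 y1 y2 y3 : ℝ) (hx1 : 0 ≤ x1) (hx2 : 0 ≤ x2) (hx3 : 0 ≤ x3)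
    (hy1 : 0 ≤ y1) (hy2 : 0 ≤ y2) (hy3 : 0 ≤ y3)
    (hx : Real.sqrt x1 ≤ Real.sqrt x2 + Real.sqrt x3)
    (hy : Real.sqrt y1 ≤ Real.sqrt y2 + Real.sqrt y3) :
    Real.sqrt (x1 + y1) ≤ Real.sqrt (x2 + y2) + Real.sqrt (x3 + y3) := by
  have a1 := Real.sq_sqrt hx1
  have a2 := Real.sq_sqrt hx2
  have a3 := Real.sq_sqrt hx3
  have b1 := Real.sq_sqrt hy1
  have b2 := Real.sq_sqrt hy2
  have b3 := Real.sq_sqrt hy3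
  have cs : Real.sqrt x2 * Real.sqrt x3 + Real.sqrt y2 * Real.sqrt y3
      ≤ Real.sqrt (x2 + y2) * Real.sqrt (x3 + y3) := by
    rw [← Real.sqrt_mul (add_nonneg hx2 hy2)]
    apply Real.le_sqrt_of_sq_le
    nlinarith [sq_nonneg (Real.sqrt x2 * Real.sqrt y3 - Real.sqrt x3 * Real.sqrt y2)]
  have hx' := pow_le_pow_left₀ (Real.sqrt_nonneg _) hx 2
  have hy' := pow_le_pow_left₀ (Real.sqrt_nonneg _) hy 2
  have c2 := Real.sq_sqrt (add_nonneg hx2 hy2)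
  have c3 := Real.sq_sqrt (add_nonneg hx3 hy3)
  rw [Real.sqrt_le_left (by positivity)]
  nlinarith

theorem JS_triangle (a b c : IFV) : JS a c ≤ JS a b + JS b c := by
  have hl : 0 < Real.log 2 := Real.log_pos one_lt_two
  have m : ∀ x : IFV, 0 ≤ 1 - x.mu := fun x => by linarith [x.sum_le, x.nu_nonneg]
  have e : ∀ x y : IFV, JS x y
      = Real.sqrt (MM (1 - x.mu) (1 - y.mu) + MM x.nu y.nu) / Real.sqrt (Real.log 2 * 2) := by
    intro x y
    unfold JS Z
    rw [L_eq _ _ (m x) (m y), L_eq _ _ x.nu_nonneg y.nu_nonneg, ← add_div, div_div,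
      Real.sqrt_div (add_nonneg (MM_nonneg _ _ (m x) (m y))
        (MM_nonneg _ _ x.nu_nonneg y.nu_nonneg))]
  rw [e, e, e, ← add_div]
  gcongr
  have n1 := fun x y : IFV => MM_nonneg _ _ (m x) (m y)
  have n2 := fun x y : IFV => MM_nonneg _ _ x.nu_nonneg y.nu_nonneg
  exact mink _ _ _ _ _ _ (n1 _ _) (n1 _ _) (n1 _ _) (n2 _ _) (n2 _ _) (n2 _ _)
    (tri _ _ _ (m a) (m b) (m c)) (tri _ _ _ a.nu_nonneg b.nu_nonneg c.nu_nonneg)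
end
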